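/- Let w₀ be the longest element of the symmetric group Sₙ (the order-reversing permutation), let λ be a partition of N with character χ_λ, and set r = ⌊N/2⌋. Then χ_λ(w₀) = Σ_{i=0}^{r} (−2)^i · C(r,i) · K_{λᵗ, (2^i, 1^{N−2i})}, where K denotes the Kostka number and λᵗ the transpose (conjugate) partition. -/

import Mathlib

open Module

/-- The Kostka number `K_{μ,c}`: the number of semistandard Young tableaux of shape `μ`
whose content is given by the function `c` (the entry `n` occurs `c n` times). -/
noncomputable def kostkaNumber (μ : YoungDiagram) (c : ℕ → ℕ) : ℕ :=
  Nat.card {T : SemistandardYoungTableau μ //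
    ∀ n : ℕ, (μ.cells.filter fun x => T x.1 x.2 = n).card = c n}

/-- The index of the block (with sizes listed by `l`) containing position `m`. -/
def blockIdx (l : List ℕ) (m : ℕ) : ℕ :=
  ((List.range l.length).filter fun j => (l.take (j + 1)).sum ≤ m).length

/-- Membership in the Young subgroup `S_l = S_{l₁} × ⋯ × S_{l_k}` of `S_N`:
the permutation preserves each of the consecutive blocks of sizes `l₁, …, l_k`. -/
def IsInYoungSubgroup (l : List ℕ) {N : ℕ} (σ : Equiv.Perm (Fin N)) : Prop :=
  ∀ k : Fin N, blockIdx l ((σ k : Fin N) : ℕ) = blockIdx l (k : ℕ)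

/-- Irreducibility of a representation: the only invariant subspaces are `⊥` and `⊤`. -/
def Representation.IsIrred {k G V : Type*} [CommSemiring k] [Monoid G] [AddCommMonoid V]
    [Module k V] (ρ : Representation k G V) : Prop :=
  ∀ U : Submodule k V, (∀ g v, v ∈ U → ρ g v ∈ U) → U = ⊥ ∨ U = ⊤

/-- The content `(2^i, 1^{N-2i})`: `i` parts equal to `2` and `N - 2i` parts equal to `1`. -/
def twoOneContent (N i : ℕ) : ℕ → ℕ :=
  fun j => if j < i then 2 else if j < N - i then 1 else 0

/-!
Twisting `π_λ` by the sign gives a representation `π'` with `χ'(w₀) = (-1)^⌊N/2⌋ χ_λ(w₀)` for which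
Young's rule for `λᵗ` holds: the invariants of the Young subgroup of any composition `c` have
dimension `K_{λᵗ, c}`. The group generated by the commuting transpositions `(j, N - 1 - j)` for
`j < i` is such a subgroup for `c = (2^i, 1^{N-2i})`, and averaging `χ'` over it gives
`2^i K_{λᵗ, c} = ∑ₘ C(i, m) Xₘ`, where `Xₘ` is the value of `χ'` at a product of `m` of these
transpositions. Binomial inversion recovers `X_⌊N/2⌋ = χ'(w₀)`.

In Young's rule the invariants are spanned by the vectors `∑_{σ : f = T ∘ σ} σ e`, where `f` labels
the positions according to `c`, `T` runs over the fillings of `λᵗ` and `e` is a polytabloid. The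
Garnir relations reduce to semistandard `T`; pairing with translates of an invariant functional
of the row group is triangular on these, so they form a basis.
-/

section Labellings

open Equiv

variable {α β ι κ : Type*}

lemma exists_equiv_comp_eq_of_card_fiber_eq [Fintype α] [Fintype β] [DecidableEq ι]
    (f : α → ι) (g : β → ι)
    (h : ∀ i, (Finset.univ.filter fun x => f x = i).card =
      (Finset.univ.filter fun y => g y = i).card) :
    ∃ e : α ≃ β, g ∘ e = f := by
  have fiberEquiv (i : ι) : {x // f x = i} ≃ {y // g y = i} :=
    Fintype.equivOfCardEq (by simp only [Fintype.card_subtype, h i])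
  exact ⟨Equiv.ofFiberEquiv fiberEquiv, funext fun x => Equiv.ofFiberEquiv_map _ x⟩

/-- The Young subgroup of a labelling `f`: the permutations that preserve every fibre of `f`.
The groups `S_ν`, and the row and column groups of a diagram, are all of this form. -/
def youngSubgroup (f : α → ι) : Subgroup (Perm α) where
  carrier := {σ | ∀ x, f (σ x) = f x}
  one_mem' _ := rfl
  mul_mem' hσ hτ x := (hσ _).trans (hτ x)
  inv_mem' {σ} hσ x := by simpa using (hσ (σ⁻¹ x)).symm

lemma mem_youngSubgroup {f : α → ι} {σ : Perm α} :
    σ ∈ youngSubgroup f ↔ ∀ x, f (σ x) = f x :=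
  Iff.rfl

instance [Fintype α] [DecidableEq ι] (f : α → ι) : DecidablePred (· ∈ youngSubgroup f) :=
  fun σ => inferInstanceAs (Decidable (∀ x, f (σ x) = f x))

lemma mem_youngSubgroup_iff_comp_eq {f : α → ι} {σ : Perm α} :
    σ ∈ youngSubgroup f ↔ f ∘ σ = f :=
  funext_iff.symm

lemma swap_mem_youngSubgroup [DecidableEq α] {f : α → ι} {x y : α} (h : f x = f y) :
    swap x y ∈ youngSubgroup f := by
  intro z
  rw [swap_apply_def]
  split_ifs with hx hy
  exacts [hx ▸ h.symm, hy ▸ h, rfl]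

lemma permCongr_mem_youngSubgroup (t : α ≃ β) {f : β → ι} {σ : Perm α} :
    t.permCongr σ ∈ youngSubgroup f ↔ σ ∈ youngSubgroup (f ∘ t) := by
  simp [mem_youngSubgroup, t.forall_congr_left]

lemma comp_eq_of_monotone_of_monotone_comp [Finite α] [LinearOrder α] [LinearOrder β]
    {f : α → β} {σ : Perm α} (hf : Monotone f) (hfσ : Monotone (f ∘ σ)) : f ∘ σ = f := by
  have := Fintype.ofFinite α
  let e : Fin (Fintype.card α) ≃o α := Fintype.orderIsoFinOfCardEq α rfl
  have key : (f ∘ e) ∘ (e.toEquiv.trans (σ.trans e.symm.toEquiv)) =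
      (f ∘ e) ∘ (1 : Perm (Fin (Fintype.card α))) :=
    Tuple.unique_monotone (fun a b h => by simpa using hfσ (e.monotone h))
      (hf.comp e.monotone)
  funext x
  simpa using congrFun key (e.symm x)

/-- The pairing `∑ q x * T x` of a position function `q` with a filling `T`. For a filling of a
diagram, with `q` the row or the column, it measures how far the entries are sorted. -/
def positionWeight [Fintype α] (q T : α → ℕ) : ℕ := ∑ x, q x * T x

lemma positionWeight_comp_of_mem_youngSubgroup [Fintype α] {q : α → ℕ} (T : α → ℕ) {σ : Perm α}
    (hσ : σ ∈ youngSubgroup q) : positionWeight q (T ∘ σ) = positionWeight q T := by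
  simpa [positionWeight, mem_youngSubgroup.1 hσ] using Equiv.sum_comp σ (fun x => q x * T x)

lemma positionWeight_lt_comp [Fintype α] {q T : α → ℕ} {σ : Perm α} (a : ℕ)
    (hlt : ∀ x, q (σ x) < q x → a < T (σ x)) (hle : ∀ x, q x < q (σ x) → T (σ x) ≤ a)
    (hσ : σ ∉ youngSubgroup q) : positionWeight q T < positionWeight q (T ∘ σ) := by
  -- As `∑ x, (q x - q (σ x)) = 0`, the entries may be shifted by `a + 1 / 2`, which makes every
  -- term of the difference nonnegative.
  have hdiff : 2 * ((positionWeight q (T ∘ σ) : ℤ) - positionWeight q T) =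
      ∑ x, ((q x : ℤ) - q (σ x)) * (2 * T (σ x) - 2 * a - 1) := by
    have hT : ∑ x, (q (σ x) : ℤ) * T (σ x) = ∑ x, (q x : ℤ) * T x :=
      Equiv.sum_comp σ fun x => (q x : ℤ) * T x
    have hq : ∑ x, (q (σ x) : ℤ) = ∑ x, (q x : ℤ) := Equiv.sum_comp σ fun x => (q x : ℤ)
    have hsplit (x : α) : ((q x : ℤ) - q (σ x)) * (2 * T (σ x) - 2 * a - 1) =
        2 * (q x * T (σ x) - q (σ x) * T (σ x)) - (2 * a + 1) * (q x - q (σ x)) := by ring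
    simp only [hsplit, Finset.sum_sub_distrib, ← Finset.mul_sum, hT, hq, sub_self, mul_zero,
      sub_zero, positionWeight, Function.comp_apply, Nat.cast_sum, Nat.cast_mul]
  have hpos {x : α} (hx : q (σ x) ≠ q x) :
      0 < ((q x : ℤ) - q (σ x)) * (2 * T (σ x) - 2 * a - 1) := by
    rcases hx.lt_or_gt with h | h
    · exact mul_pos (by lia) (by have := hlt x h; lia)
    · exact mul_pos_of_neg_of_neg (by lia) (by have := hle x h; lia)
  have hnonneg (x : α) : 0 ≤ ((q x : ℤ) - q (σ x)) * (2 * T (σ x) - 2 * a - 1) := by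
    by_cases hx : q (σ x) = q x
    · simp [hx]
    · exact (hpos hx).le
  obtain ⟨x, hx⟩ := not_forall.1 hσ
  have := Finset.sum_pos' (fun x _ => hnonneg x) ⟨x, Finset.mem_univ x, hpos hx⟩
  lia

lemma positionWeight_lt_comp_swap [Fintype α] [DecidableEq α] {q T : α → ℕ} {x y : α}
    (hq : q x < q y) (hT : T y < T x) :
    positionWeight q T < positionWeight q (T ∘ swap x y) := by
  refine positionWeight_lt_comp (T y) (fun z => ?_) (fun z => ?_) fun h => ?_
  · rw [swap_apply_def]
    split_ifs <;> grind
  · rw [swap_apply_def]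
    split_ifs <;> grind
  · have := h x
    rw [swap_apply_left] at this
    exact hq.ne' this

/-- `T` is weakly increasing in the position `q` along every fibre of `p`. With `p` the row and
`q` the column of a cell, this is the row condition for semistandard tableaux. -/
def MonoOnFibers [LE κ] [LE β] (p : α → ι) (q : α → κ) (T : α → β) : Prop :=
  ∀ ⦃x y⦄, p x = p y → q x ≤ q y → T x ≤ T y

/-- `T` is strictly increasing in the position `q` along every fibre of `p`. With `p` the column
and `q` the row of a cell, this is the column condition for semistandard tableaux. -/
def StrictMonoOnFibers [LT κ] [LT β] (p : α → ι) (q : α → κ) (T : α → β) : Prop :=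
  ∀ ⦃x y⦄, p x = p y → q x < q y → T x < T y

lemma StrictMonoOnFibers.monoOnFibers [PartialOrder κ] [Preorder β] {p : α → ι} {q : α → κ}
    {T : α → β} (hpq : Function.Injective fun x => (p x, q x)) (hT : StrictMonoOnFibers p q T) :
    MonoOnFibers p q T := by
  intro x y hp hq
  rcases hq.eq_or_lt with hq | hq
  · rw [hpq (Prod.ext hp hq)]
  · exact (hT hp hq).le

lemma StrictMonoOnFibers.eq_of_eq [LinearOrder κ] [Preorder β] {p : α → ι} {q : α → κ}
    {T : α → β} (hpq : Function.Injective fun x => (p x, q x)) (hT : StrictMonoOnFibers p q T)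
    {x y : α} (hp : p x = p y) (h : T x = T y) : x = y := by
  refine hpq (Prod.ext hp ?_)
  rcases lt_trichotomy (q x) (q y) with hq | hq | hq
  exacts [absurd h (hT hp hq).ne, hq, absurd h (hT hp.symm hq).ne']

lemma MonoOnFibers.comp_eq [Finite α] [LinearOrder ι] [LinearOrder κ] [LinearOrder β]
    {p : α → ι} {q : α → κ} (hpq : Function.Injective fun x => (p x, q x)) {T : α → β}
    {σ : Perm α} (hσ : σ ∈ youngSubgroup p) (hT : MonoOnFibers p q T)
    (hTσ : MonoOnFibers p q (T ∘ σ)) : T ∘ σ = T := by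
  -- Ordering `α` by `(p, q)` lexicographically makes `x ↦ (p x, T x)` monotone.
  let _ : LinearOrder α := LinearOrder.lift' (fun x => toLex (p x, q x)) (toLex.injective.comp hpq)
  have lexMono {S : α → β} (hS : MonoOnFibers p q S) :
      Monotone fun x => toLex (p x, S x) := by
    intro x y hxy
    rcases Prod.Lex.toLex_le_toLex.1 hxy with h | ⟨h, h'⟩
    exacts [Prod.Lex.toLex_le_toLex.2 (.inl h), Prod.Lex.toLex_le_toLex.2 (.inr ⟨h, hS h h'⟩)]
  have hcomp : (fun x => toLex (p x, T x)) ∘ σ = fun x => toLex (p x, (T ∘ σ) x) :=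
    funext fun x => by simp [mem_youngSubgroup.1 hσ]
  have key := comp_eq_of_monotone_of_monotone_comp (lexMono hT) (hcomp ▸ lexMono hTσ)
  funext x
  exact congrArg Prod.snd (toLex.injective (congrFun (hcomp.symm.trans key) x))

section Sorting

variable [Fintype α] {p : α → ι} {q T : α → ℕ}

lemma strictMonoOnFibers_comp_of_isMaxOn (hinj : ∀ x y, p x = p y → T x = T y → x = y)
    {c : Perm α} (hc : c ∈ youngSubgroup p)
    (hmax : IsMaxOn (fun d : Perm α => positionWeight q (T ∘ d)) (youngSubgroup p) c) :
    StrictMonoOnFibers p q (T ∘ c) := by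
  classical
  intro x y hp hq
  by_contra! hle
  have hxy : x ≠ y := by rintro rfl; exact hq.false
  have hlt : (T ∘ c) y < (T ∘ c) x := hle.lt_of_ne fun h =>
    hxy (c.injective (hinj _ _ (by rw [hc x, hc y, hp]) h.symm))
  exact (positionWeight_lt_comp_swap hq hlt).not_ge
    (hmax (mul_mem hc (swap_mem_youngSubgroup hp)))

lemma exists_isMaxOn_positionWeight (p : α → ι) (q T : α → ℕ) :
    ∃ c ∈ youngSubgroup p,
      IsMaxOn (fun d : Perm α => positionWeight q (T ∘ d)) (youngSubgroup p) c := by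
  obtain ⟨c, hc, hmax⟩ := Set.exists_max_image (youngSubgroup p : Set (Perm α))
    (fun d => positionWeight q (T ∘ d)) (Set.toFinite _) ⟨1, one_mem _⟩
  exact ⟨c, hc, isMaxOn_iff.2 hmax⟩

-- A maximizer of the weight is sorted, and only the identity keeps `T` sorted.
lemma StrictMonoOnFibers.positionWeight_comp_lt [LinearOrder ι]
    (hpq : Function.Injective fun x => (p x, q x)) (hT : StrictMonoOnFibers p q T) {c : Perm α}
    (hc : c ∈ youngSubgroup p) (hc1 : c ≠ 1) :
    positionWeight q (T ∘ c) < positionWeight q T := by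
  have hinj (x y : α) (hp : p x = p y) (h : T x = T y) : x = y := hT.eq_of_eq hpq hp h
  have eq_one_of_isMax {d : Perm α} (hd : d ∈ youngSubgroup p)
      (hmax : IsMaxOn (fun d : Perm α => positionWeight q (T ∘ d)) (youngSubgroup p) d) :
      d = 1 := by
    have hTd := strictMonoOnFibers_comp_of_isMaxOn hinj hd hmax
    have := (hT.monoOnFibers hpq).comp_eq hpq hd (hTd.monoOnFibers hpq)
    exact Equiv.ext fun x => hinj _ _ (hd x) (congrFun this x)
  obtain ⟨d, hd, hmax⟩ := exists_isMaxOn_positionWeight p q T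
  obtain rfl := eq_one_of_isMax hd hmax
  refine (hmax hc).lt_of_ne fun heq => hc1 (eq_one_of_isMax hc fun e he => ?_)
  exact (hmax he).trans heq.ge

end Sorting

lemma exists_strictMonoOnFibers_comp [Finite α] {p : α → ι} {T : α → ℕ} (q : α → ℕ)
    (hinj : ∀ x y, p x = p y → T x = T y → x = y) :
    ∃ c ∈ youngSubgroup p, StrictMonoOnFibers p q (T ∘ c) := by
  have := Fintype.ofFinite α
  obtain ⟨c, hc, hmax⟩ := exists_isMaxOn_positionWeight p q T
  exact ⟨c, hc, strictMonoOnFibers_comp_of_isMaxOn hinj hc hmax⟩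

end Labellings

section Diagrams

open Equiv

variable {μ : YoungDiagram}

/-- The row of a cell, counted from `0`. -/
abbrev rowOf (x : μ.cells) : ℕ := x.1.1

/-- The column of a cell, counted from `0`. -/
abbrev colOf (x : μ.cells) : ℕ := x.1.2

variable (μ) in
/-- The group of row-preserving permutations of the cells of `μ`. -/
abbrev rowGroup : Subgroup (Perm μ.cells) := youngSubgroup rowOf

variable (μ) in
/-- The group of column-preserving permutations of the cells of `μ`. -/
abbrev colGroup : Subgroup (Perm μ.cells) := youngSubgroup colOf

lemma injective_rowOf_colOf : Function.Injective fun x : μ.cells => (rowOf x, colOf x) :=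
  Subtype.val_injective

lemma injective_colOf_rowOf : Function.Injective fun x : μ.cells => (colOf x, rowOf x) :=
  Prod.swap_injective.comp injective_rowOf_colOf

lemma rowOf_lt_colLen (x : μ.cells) : rowOf x < μ.colLen (colOf x) :=
  YoungDiagram.mem_iff_lt_colLen.1 (by simp)

lemma StrictMonoOnFibers.rowOf_le {T : μ.cells → ℕ} (hT : StrictMonoOnFibers colOf rowOf T)
    (x : μ.cells) : rowOf x ≤ T x := by
  obtain ⟨⟨i, j⟩, hx⟩ := x
  induction i with
  | zero => exact Nat.zero_le _
  | succ i ih =>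
    have hmem : (i, j) ∈ μ.cells :=
      (YoungDiagram.mem_cells _).2
        (μ.up_left_mem i.le_succ le_rfl ((YoungDiagram.mem_cells _).1 hx))
    exact (ih hmem).trans_lt (hT rfl i.lt_succ_self)

lemma exists_mul_eq_of_separating {g : Perm μ.cells}
    (hg : ∀ x y, colOf x = colOf y → rowOf (g x) = rowOf (g y) → x = y) :
    ∃ r ∈ rowGroup μ, ∃ c ∈ colGroup μ, r * c = g := by
  obtain ⟨c, hc, hstrict⟩ := exists_strictMonoOnFibers_comp rowOf (T := rowOf ∘ g) hg
  have hsum : ∑ x : μ.cells, rowOf x = ∑ x, rowOf ((g * c) x) :=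
    (Equiv.sum_comp (g * c) (rowOf (μ := μ))).symm
  have hrow := (Finset.sum_eq_sum_iff_of_le fun x _ => hstrict.rowOf_le x).1 hsum
  exact ⟨g * c, fun x => (hrow x (Finset.mem_univ x)).symm, c⁻¹, inv_mem hc, by simp⟩

/-- The Garnir set of the cells `x` and `y`: the part of the column of `x` from `x` downwards,
together with the part of the column of `y` down to the row of `x`. -/
def garnirSet (x y : μ.cells) : Finset μ.cells :=
  Finset.univ.filter fun z =>
    colOf z = colOf x ∧ rowOf x ≤ rowOf z ∨ colOf z = colOf y ∧ rowOf z ≤ rowOf x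

lemma mem_garnirSet {x y z : μ.cells} : z ∈ garnirSet x y ↔
    colOf z = colOf x ∧ rowOf x ≤ rowOf z ∨ colOf z = colOf y ∧ rowOf z ≤ rowOf x := by
  simp only [garnirSet, Finset.mem_filter, Finset.mem_univ, true_and]

lemma colLen_lt_card_garnirSet {x y : μ.cells} (hrow : rowOf x = rowOf y)
    (hcol : colOf x ≠ colOf y) : μ.colLen (colOf x) < (garnirSet x y).card := by
  have hsurj : Set.SurjOn
      (fun z : μ.cells => if colOf z = colOf y then rowOf z else rowOf z + 1)
      (garnirSet x y) (Finset.range (μ.colLen (colOf x) + 1)) := by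
    intro m hm
    have hm : m < μ.colLen (colOf x) + 1 := by simpa using hm
    rcases le_or_gt m (rowOf x) with hmx | hmx
    · have hmem : (m, colOf y) ∈ μ.cells := (YoungDiagram.mem_cells _).2
        (μ.up_left_mem (hmx.trans hrow.le) le_rfl ((YoungDiagram.mem_cells _).1 y.2))
      exact ⟨⟨_, hmem⟩, mem_garnirSet.2 (.inr ⟨rfl, hmx⟩), if_pos rfl⟩
    · have hmem : (m - 1, colOf x) ∈ μ.cells :=
        (YoungDiagram.mem_cells _).2 (YoungDiagram.mem_iff_lt_colLen.2 (by lia))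
      refine ⟨⟨_, hmem⟩, mem_garnirSet.2 (.inl ⟨rfl, Nat.le_sub_one_of_lt hmx⟩), ?_⟩
      simp only [if_neg hcol]
      lia
  simpa using Finset.card_le_card_of_surjOn _ hsurj

lemma positionWeight_colOf_lt_of_garnirSet {T : μ.cells → ℕ}
    (hT : StrictMonoOnFibers colOf rowOf T) {x y : μ.cells} (hrow : rowOf x = rowOf y)
    (hcol : colOf x < colOf y) (hlt : T y < T x) (σ : Perm (garnirSet x y))
    (hσ : Perm.ofSubtype σ ∉ colGroup μ) :
    positionWeight colOf T < positionWeight colOf (T ∘ Perm.ofSubtype σ) := by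
  have hmono := hT.monoOnFibers injective_colOf_rowOf
  have hentry {z : μ.cells} (hz : z ∈ garnirSet x y) :
      colOf z = colOf x ∧ T y < T z ∨ colOf z = colOf y ∧ T z ≤ T y := by
    rcases mem_garnirSet.1 hz with ⟨hzx, hle⟩ | ⟨hzy, hle⟩
    · exact .inl ⟨hzx, hlt.trans_le (hmono hzx.symm hle)⟩
    · exact .inr ⟨hzy, hmono hzy (hle.trans hrow.le)⟩
  have hmoved {z : μ.cells} (hz : colOf (Perm.ofSubtype σ z) ≠ colOf z) :
      z ∈ garnirSet x y ∧ Perm.ofSubtype σ z ∈ garnirSet x y := by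
    have hmem : z ∈ garnirSet x y := by
      by_contra h
      exact hz (congrArg colOf (Perm.ofSubtype_apply_of_not_mem σ h))
    exact ⟨hmem, (Perm.ofSubtype_apply_mem_iff_mem σ z).2 hmem⟩
  refine positionWeight_lt_comp (T y) (fun z h => ?_) (fun z h => ?_) hσ
  · obtain ⟨hz, hσz⟩ := hmoved h.ne
    have := hentry hz
    have := hentry hσz
    lia
  · obtain ⟨hz, hσz⟩ := hmoved h.ne'
    have := hentry hz
    have := hentry hσz
    lia

end Diagrams

section Representations

open Equiv

variable {k G V : Type*}

section Semiring

variable [CommSemiring k] [AddCommMonoid V] [Module k V]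

section Monoid

variable [Monoid G] {ρ : Representation k G V}

lemma eq_zero_of_isIrred_of_forall_apply_eq_zero {W : Type*} [AddCommMonoid W] [Module k W]
    (hirr : ρ.IsIrred) {φ : V →ₗ[k] W} (hφ : φ ≠ 0) {x : V} (hx : ∀ g, φ (ρ g x) = 0) :
    x = 0 := by
  let U : Submodule k V := ⨅ g, LinearMap.ker (φ ∘ₗ ρ g)
  have mem_U {v : V} : v ∈ U ↔ ∀ g, φ (ρ g v) = 0 := by simp [U]
  have hU (g : G) (v : V) (hv : v ∈ U) : ρ g v ∈ U :=
    mem_U.2 fun h => by simpa using mem_U.1 hv (h * g)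
  rcases hirr U hU with h | h
  · exact (Submodule.eq_bot_iff U).1 h x (mem_U.2 hx)
  · refine absurd (LinearMap.ext fun v => ?_) hφ
    simpa using mem_U.1 (h ▸ Submodule.mem_top : v ∈ U) 1

lemma span_range_apply_eq_top_of_isIrred (hirr : ρ.IsIrred) {e : V} (he : e ≠ 0) :
    Submodule.span k (Set.range fun g => ρ g e) = ⊤ := by
  refine (hirr _ fun g v hv => ?_).resolve_left fun h => he ?_
  · have := Submodule.mem_map_of_mem (f := ρ g) hv
    rw [Submodule.map_span, ← Set.range_comp] at this
    refine Submodule.span_mono ?_ this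
    rintro _ ⟨h, rfl⟩
    exact ⟨g * h, by simp⟩
  · simpa using (Submodule.span_eq_bot.1 h) _ ⟨1, rfl⟩

lemma module_finite_of_isIrred [Finite G] (hirr : ρ.IsIrred) : Module.Finite k V := by
  rcases subsingleton_or_nontrivial V with _ | _
  · infer_instance
  · obtain ⟨e, he⟩ := exists_ne (0 : V)
    exact ⟨Submodule.fg_def.2
      ⟨_, Set.finite_range _, span_range_apply_eq_top_of_isIrred hirr he⟩⟩

lemma isIrred_comp_of_surjective {H : Type*} [Monoid H] {f : H →* G}
    (hf : Function.Surjective f) (hirr : ρ.IsIrred) :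
    Representation.IsIrred (MonoidHom.comp ρ f) := by
  refine fun U hU => hirr U fun g v hv => ?_
  obtain ⟨h, rfl⟩ := hf g
  exact hU h v hv

end Monoid

end Semiring

section Ring

variable [CommRing k] [AddCommGroup V] [Module k V]

/-- The twist of a representation by a character with values in `{1, -1}`. -/
def signTwist [Monoid G] (χ : G →* ℤˣ) (ρ : Representation k G V) : Representation k G V where
  toFun g := χ g • ρ g
  map_one' := by simp
  map_mul' g h := by simp only [map_mul, smul_mul_smul_comm]

lemma signTwist_apply [Monoid G] (χ : G →* ℤˣ) (ρ : Representation k G V) (g : G) (v : V) :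
    signTwist χ ρ g v = χ g • ρ g v :=
  rfl

lemma isIrred_signTwist [Monoid G] (χ : G →* ℤˣ) {ρ : Representation k G V} (hirr : ρ.IsIrred) :
    (signTwist χ ρ).IsIrred := by
  refine fun U hU => hirr U fun g v hv => ?_
  have := U.smul_of_tower_mem (χ g) (hU g v hv)
  rwa [signTwist_apply, smul_smul, Int.units_mul_self, one_smul] at this

lemma trace_signTwist [Monoid G] (χ : G →* ℤˣ) (ρ : Representation k G V) (g : G) :
    LinearMap.trace k V (signTwist χ ρ g) = χ g • LinearMap.trace k V (ρ g) :=
  (LinearMap.trace k V).map_smul_of_tower (χ g) (ρ g)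

/-- The alternating sum of the action of the permutations supported on `Y`; the Garnir relations
say that it annihilates certain vectors. -/
def antisymmetrizer {α : Type*} [DecidableEq α] (ρ : Representation k (Perm α) V)
    (Y : Finset α) : V →ₗ[k] V :=
  ∑ σ : Perm Y, Perm.sign σ • ρ (Perm.ofSubtype σ)

lemma antisymmetrizer_apply {α : Type*} [DecidableEq α] (ρ : Representation k (Perm α) V)
    (Y : Finset α) (v : V) :
    antisymmetrizer ρ Y v = ∑ σ : Perm Y, Perm.sign σ • ρ (Perm.ofSubtype σ) v := by
  simp [antisymmetrizer]

lemma apply_ofSubtype_antisymmetrizer {α : Type*} [DecidableEq α]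
    (ρ : Representation k (Perm α) V) {Y : Finset α} (τ : Perm Y) (v : V) :
    ρ (Perm.ofSubtype τ) (antisymmetrizer ρ Y v) = Perm.sign τ • antisymmetrizer ρ Y v := by
  simp only [antisymmetrizer_apply, map_sum, Finset.smul_sum]
  refine Fintype.sum_equiv (Equiv.mulLeft τ) _ _ fun σ => ?_
  simp [smul_smul, ← mul_assoc]

end Ring

section Transport

variable {α ι : Type*} [Fintype α] [DecidableEq α] [DecidableEq ι] [CommSemiring k]
  [AddCommMonoid V] [Module k V]

/-- The sum of the action of all permutations that turn the reference labelling `f` into the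
labelling `T`. Applied to a polytabloid it gives a vector invariant under the stabilizer of `f`. -/
def transportSum (ρ : Representation k (Perm α) V) (f T : α → ι) : V →ₗ[k] V :=
  ∑ g with f ∘ ⇑(g : Perm α) = T, ρ g

variable (ρ : Representation k (Perm α) V) (f : α → ι)

lemma transportSum_apply (T : α → ι) (v : V) :
    transportSum ρ f T v = ∑ g with f ∘ ⇑(g : Perm α) = T, ρ g v := by
  simp [transportSum]

lemma transportSum_comp (T : α → ι) (σ : Perm α) (v : V) :
    transportSum ρ f (T ∘ σ) v = transportSum ρ f T (ρ σ v) := by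
  simp only [transportSum_apply]
  refine Finset.sum_equiv (Equiv.mulRight σ⁻¹) (fun g => ?_) fun g _ => by simp
  simp [← Function.comp_assoc, Equiv.comp_symm_eq, Perm.inv_def]

lemma transportSum_comp_left (T : α → ι) (σ : Perm α) (v : V) :
    transportSum ρ (f ∘ σ) T v = ρ σ⁻¹ (transportSum ρ f T v) := by
  simp only [transportSum_apply, map_sum]
  refine Finset.sum_equiv (Equiv.mulLeft σ) (fun g => ?_) fun g _ => by simp
  simp [Function.comp_assoc]

lemma transportSum_comp_self (σ : Perm α) (v : V) :
    transportSum ρ f (f ∘ σ) v = ∑ τ : youngSubgroup f, ρ τ (ρ σ v) := by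
  classical
  rw [transportSum_comp, transportSum_apply]
  exact (Finset.sum_subtype _ (by simp [mem_youngSubgroup_iff_comp_eq]) fun τ => ρ τ (ρ σ v))

end Transport

section Field

variable [Field k] [AddCommGroup V] [Module k V] [Group G] (ρ : Representation k G V)

lemma norm_apply_of_mem_invariants [Fintype G] {v : V} (hv : v ∈ ρ.invariants) :
    ρ.norm v = (Fintype.card G : k) • v := by
  simp [Representation.norm, hv _, Nat.cast_smul_eq_nsmul]

variable [CharZero k]

lemma range_norm_eq_invariants [Fintype G] : LinearMap.range ρ.norm = ρ.invariants := by
  refine le_antisymm ?_ fun v hv => ⟨(Fintype.card G : k)⁻¹ • v, ?_⟩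
  · rintro _ ⟨v, rfl⟩ g
    exact ρ.self_norm_apply g v
  · rw [map_smul, norm_apply_of_mem_invariants ρ hv, inv_smul_smul₀ (by simp)]

lemma exists_invariant_functional_apply_ne_zero [Finite G] {v : V} (hv : v ∈ ρ.invariants)
    (hv0 : v ≠ 0) : ∃ φ : V →ₗ[k] k, (∀ g x, φ (ρ g x) = φ x) ∧ φ v ≠ 0 := by
  have := Fintype.ofFinite G
  obtain ⟨φ, hφ⟩ := not_forall.1 ((forall_dual_apply_eq_zero_iff k v).not.2 hv0)
  refine ⟨φ ∘ₗ ρ.norm, fun g x => by simp, ?_⟩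
  simpa [norm_apply_of_mem_invariants ρ hv] using hφ

end Field

end Representations

section Polytabloids

open Equiv

variable {k V : Type*} [Field k] [AddCommGroup V] [Module k V] {μ : YoungDiagram}
  {ρ : Representation k (Perm μ.cells) V} {e : V} {φ : V →ₗ[k] k}

/-- A vector on which the column group acts by the sign, as it does on a polytabloid. -/
def IsColAlternating (ρ : Representation k (Perm μ.cells) V) (e : V) : Prop :=
  ∀ c ∈ colGroup μ, ρ c e = Perm.sign c • e

/-- A functional that is invariant under the row group. -/
def IsRowInvariant (ρ : Representation k (Perm μ.cells) V) (φ : V →ₗ[k] k) : Prop :=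
  ∀ r ∈ rowGroup μ, ∀ v, φ (ρ r v) = φ v

lemma apply_mul_eq_sign_smul (he : IsColAlternating ρ e) (hφ : IsRowInvariant ρ φ)
    {r c : Perm μ.cells} (hr : r ∈ rowGroup μ) (hc : c ∈ colGroup μ) :
    φ (ρ (r * c) e) = Perm.sign c • φ e := by
  rw [map_mul, Module.End.mul_apply, hφ r hr, he c hc, φ.map_smul_of_tower]

lemma IsRowInvariant.apply_apply_swap (hφ : IsRowInvariant ρ φ) {g : Perm μ.cells}
    {x y : μ.cells} (hrow : rowOf (g x) = rowOf (g y)) (v : V) :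
    φ (ρ g (ρ (swap x y) v)) = φ (ρ g v) := by
  rw [← hφ _ (swap_mem_youngSubgroup hrow) (ρ g v), ← Module.End.mul_apply, ← map_mul,
    ← Module.End.mul_apply, ← map_mul, swap_apply_apply, inv_mul_cancel_right]

variable [CharZero k]

lemma exists_mul_eq_of_apply_ne_zero (he : IsColAlternating ρ e) (hφ : IsRowInvariant ρ φ)
    {g : Perm μ.cells} (hg : φ (ρ g e) ≠ 0) :
    ∃ r ∈ rowGroup μ, ∃ c ∈ colGroup μ, r * c = g := by
  refine exists_mul_eq_of_separating fun x y hcol hrow => ?_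
  by_contra hxy
  have hneg := hφ.apply_apply_swap hrow e
  rw [he _ (swap_mem_youngSubgroup hcol), Perm.sign_swap hxy, Units.neg_smul, one_smul, map_neg,
    map_neg] at hneg
  exact hg (self_eq_neg.1 hneg.symm)

lemma apply_antisymmetrizer_eq_zero (he : IsColAlternating ρ e) (hφ : IsRowInvariant ρ φ)
    {Y : Finset μ.cells} {j : ℕ} (hcol : ∀ x ∈ Y, j ≤ colOf x) (hcard : μ.colLen j < Y.card)
    (u : Perm μ.cells) : φ (ρ u (antisymmetrizer ρ Y e)) = 0 := by
  by_contra hne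
  obtain ⟨σ, hσ⟩ : ∃ σ : Perm Y, φ (ρ (u * Perm.ofSubtype σ) e) ≠ 0 := by
    by_contra! h
    exact hne (by simpa [antisymmetrizer_apply, LinearMap.map_smul_of_tower] using
      Finset.sum_eq_zero fun σ _ => by simpa using congrArg (Perm.sign σ • ·) (h σ))
  obtain ⟨r, hr, c, hc, hrc⟩ := exists_mul_eq_of_apply_ne_zero he hφ hσ
  have hrow_lt (z : Y) : rowOf (c (σ⁻¹ z)) ∈ Finset.range (μ.colLen j) :=
    Finset.mem_range.2 <| (rowOf_lt_colLen _).trans_le <|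
      μ.colLen_anti _ _ ((hcol _ (σ⁻¹ z).2).trans_eq (hc _).symm)
  obtain ⟨x, -, y, -, hxy, hrow⟩ := Finset.exists_ne_map_eq_of_card_lt_of_maps_to
    (s := Finset.univ) (by simpa using hcard) fun z _ => hrow_lt z
  have hu (z : Y) : rowOf (u z) = rowOf (c (σ⁻¹ z)) := by
    have := congrArg rowOf (DFunLike.congr_fun hrc ((σ⁻¹ z : Y) : μ.cells))
    simpa [hr _] using this.symm
  have hneg := hφ.apply_apply_swap (((hu x).trans hrow).trans (hu y).symm)
    (antisymmetrizer ρ Y e)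
  rw [← Perm.ofSubtype_swap_eq, apply_ofSubtype_antisymmetrizer, Perm.sign_swap hxy, Units.neg_smul,
    one_smul, map_neg, map_neg] at hneg
  exact hne (self_eq_neg.1 hneg.symm)

lemma antisymmetrizer_eq_zero (hirr : ρ.IsIrred) (he : IsColAlternating ρ e)
    (hφ : IsRowInvariant ρ φ) (hφe : φ e ≠ 0) {Y : Finset μ.cells} {j : ℕ}
    (hcol : ∀ x ∈ Y, j ≤ colOf x) (hcard : μ.colLen j < Y.card) : antisymmetrizer ρ Y e = 0 :=
  eq_zero_of_isIrred_of_forall_apply_eq_zero hirr (φ := φ) (fun h => hφe (by simp [h]))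
    (apply_antisymmetrizer_eq_zero he hφ hcol hcard)

lemma exists_isRowInvariant_apply_ne_zero (hirr : ρ.IsIrred) {v : V} (hv0 : v ≠ 0)
    (hv : ∀ r ∈ rowGroup μ, ρ r v = v) (he0 : e ≠ 0) (he : IsColAlternating ρ e) :
    ∃ φ : V →ₗ[k] k, IsRowInvariant ρ φ ∧ φ e ≠ 0 := by
  obtain ⟨φ, hφ, hφv⟩ := exists_invariant_functional_apply_ne_zero
    (MonoidHom.comp ρ (rowGroup μ).subtype) (v := v) (fun r => hv r r.2) hv0
  have hφ : IsRowInvariant ρ φ := fun r hr => hφ ⟨r, hr⟩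
  refine ⟨φ, hφ, fun h0 => he0 ?_⟩
  refine eq_zero_of_isIrred_of_forall_apply_eq_zero hirr (φ := φ)
    (fun h => hφv (by simp [h])) fun g => ?_
  by_contra hg
  obtain ⟨r, hr, c, hc, rfl⟩ := exists_mul_eq_of_apply_ne_zero he hφ hg
  exact hg (by rw [apply_mul_eq_sign_smul he hφ hr hc, h0, smul_zero])

end Polytabloids

section Straightening

open Equiv

variable {k V : Type*} [Field k] [AddCommGroup V] [Module k V] {μ : YoungDiagram}
  {ρ : Representation k (Perm μ.cells) V} {e : V} {φ : V →ₗ[k] k}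

/-- The semistandard fillings obtained by permuting the labels of `f`. -/
def semistandardRearrangements (f : μ.cells → ℕ) : Set (μ.cells → ℕ) :=
  {S | (∃ g : Perm μ.cells, f ∘ g = S) ∧
    StrictMonoOnFibers colOf rowOf S ∧ MonoOnFibers rowOf colOf S}

variable (f : μ.cells → ℕ)

lemma transportSum_comp_of_mem_colGroup (he : IsColAlternating ρ e) (T : μ.cells → ℕ)
    {c : Perm μ.cells} (hc : c ∈ colGroup μ) :
    transportSum ρ f (T ∘ c) e = Perm.sign c • transportSum ρ f T e := by
  rw [transportSum_comp, he c hc, LinearMap.map_smul_of_tower]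

variable [CharZero k]

lemma transportSum_eq_zero_of_repeated (he : IsColAlternating ρ e) {T : μ.cells → ℕ}
    {x y : μ.cells} (hcol : colOf x = colOf y) (hT : T x = T y) (hxy : x ≠ y) :
    transportSum ρ f T e = 0 := by
  have hswap : T ∘ swap x y = T :=
    mem_youngSubgroup_iff_comp_eq.1 (swap_mem_youngSubgroup hT)
  have hneg := transportSum_comp_of_mem_colGroup f he T (swap_mem_youngSubgroup hcol)
  rw [hswap, Perm.sign_swap hxy, Units.neg_smul, one_smul] at hneg
  rw [eq_neg_iff_add_eq_zero, ← two_smul k] at hneg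
  exact (smul_eq_zero.1 hneg).resolve_left two_ne_zero

lemma transportSum_mem_of_antisymmetrizer_eq_zero (he : IsColAlternating ρ e)
    {Y : Finset μ.cells} (hY : antisymmetrizer ρ Y e = 0) {W : Submodule k V} {T : μ.cells → ℕ}
    (hW : ∀ σ : Perm Y, Perm.ofSubtype σ ∉ colGroup μ →
      transportSum ρ f (T ∘ Perm.ofSubtype σ) e ∈ W) :
    transportSum ρ f T e ∈ W := by
  let C : Finset (Perm Y) := Finset.univ.filter fun σ => Perm.ofSubtype σ ∈ colGroup μ
  have hrel : ∑ σ : Perm Y, Perm.sign σ • transportSum ρ f (T ∘ Perm.ofSubtype σ) e = 0 := by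
    have := congrArg (transportSum ρ f T) hY
    simpa only [antisymmetrizer_apply, map_sum, LinearMap.map_smul_of_tower, ← transportSum_comp,
      map_zero] using this
  have hC : ∑ σ ∈ C, Perm.sign σ • transportSum ρ f (T ∘ Perm.ofSubtype σ) e =
      (C.card : k) • transportSum ρ f T e := by
    rw [Nat.cast_smul_eq_nsmul, ← Finset.sum_const]
    refine Finset.sum_congr rfl fun σ hσ => ?_
    rw [transportSum_comp_of_mem_colGroup f he T (Finset.mem_filter.1 hσ).2,
      Perm.sign_ofSubtype, smul_smul, Int.units_mul_self, one_smul]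
  have hcard : (C.card : k) ≠ 0 :=
    Nat.cast_ne_zero.2 (Finset.card_ne_zero_of_mem
      (Finset.mem_filter.2 ⟨Finset.mem_univ 1, by simp⟩))
  rw [← Finset.sum_filter_add_sum_filter_not _ fun σ : Perm Y => Perm.ofSubtype σ ∈ colGroup μ,
    hC, add_eq_zero_iff_eq_neg] at hrel
  rw [← W.smul_mem_iff hcard, hrel]
  exact W.neg_mem (W.sum_mem fun σ hσ =>
    W.smul_of_tower_mem _ (hW σ (Finset.mem_filter.1 hσ).2))

lemma transportSum_mem_of_descent (hirr : ρ.IsIrred) (he : IsColAlternating ρ e)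
    (hφ : IsRowInvariant ρ φ) (hφe : φ e ≠ 0) {W : Submodule k V} {T : μ.cells → ℕ}
    (hT : StrictMonoOnFibers colOf rowOf T) (hdesc : ¬MonoOnFibers rowOf colOf T)
    (hW : ∀ σ : Perm μ.cells, positionWeight colOf T < positionWeight colOf (T ∘ σ) →
      transportSum ρ f (T ∘ σ) e ∈ W) :
    transportSum ρ f T e ∈ W := by
  simp only [MonoOnFibers, not_forall, not_le] at hdesc
  obtain ⟨x, y, hrow, hle, hlt⟩ := hdesc
  have hcol : colOf x < colOf y := hle.lt_of_ne fun h =>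
    hlt.ne' (congrArg T (injective_rowOf_colOf (Prod.ext hrow h)))
  have hgarnir : antisymmetrizer ρ (garnirSet x y) e = 0 := by
    refine antisymmetrizer_eq_zero hirr he hφ hφe (fun z hz => ?_)
      (colLen_lt_card_garnirSet hrow hcol.ne)
    rcases mem_garnirSet.1 hz with h | h <;> lia
  exact transportSum_mem_of_antisymmetrizer_eq_zero f he hgarnir fun σ hσ =>
    hW _ (positionWeight_colOf_lt_of_garnirSet hT hrow hcol hlt σ hσ)

lemma transportSum_mem_span_semistandard (hirr : ρ.IsIrred) (he : IsColAlternating ρ e)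
    (hφ : IsRowInvariant ρ φ) (hφe : φ e ≠ 0) (u : Perm μ.cells) :
    transportSum ρ f (f ∘ u) e ∈ Submodule.span k
      ((fun S => transportSum ρ f S e) '' semistandardRearrangements f) := by
  set W := Submodule.span k ((fun S => transportSum ρ f S e) '' semistandardRearrangements f)
  have wf : WellFounded fun v u : Perm μ.cells =>
      positionWeight colOf (f ∘ u) < positionWeight colOf (f ∘ v) :=
    @Finite.wellFounded_of_trans_of_irrefl _ _ _ ⟨fun _ _ _ h h' => h'.trans h⟩
      ⟨fun _ => lt_irrefl _⟩
  induction u using wf.induction with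
  | _ u ih =>
    by_cases hinj : ∀ x y, colOf x = colOf y → (f ∘ u) x = (f ∘ u) y → x = y
    swap
    · push Not at hinj
      obtain ⟨x, y, hcol, hT, hxy⟩ := hinj
      exact transportSum_eq_zero_of_repeated f he hcol hT hxy ▸ W.zero_mem
    obtain ⟨c, hc, hstrict⟩ := exists_strictMonoOnFibers_comp rowOf hinj
    have hsorted : transportSum ρ f (f ∘ u ∘ c) e ∈ W := by
      by_cases hweak : MonoOnFibers rowOf colOf (f ∘ u ∘ c)
      · exact Submodule.subset_span ⟨_, ⟨⟨u * c, rfl⟩, hstrict, hweak⟩, rfl⟩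
      · refine transportSum_mem_of_descent f hirr he hφ hφe hstrict hweak fun σ hσ => ?_
        refine ih (u * c * σ) ?_
        rwa [← positionWeight_comp_of_mem_youngSubgroup (f ∘ u) hc]
    rw [← Function.comp_assoc, transportSum_comp_of_mem_colGroup f he _ hc] at hsorted
    exact (W.smul_mem_iff' _).1 hsorted

end Straightening

section Independence

open Equiv

lemma linearIndependent_of_triangular {ι κ R M : Type*} [LinearOrder κ] [Ring R] [NoZeroDivisors R]
    [AddCommGroup M] [Module R M] {v : ι → M} (w : ι → κ) (ψ : ι → M →ₗ[R] R)
    (hdiag : ∀ i, ψ i (v i) ≠ 0) (hoff : ∀ i j, j ≠ i → w j ≤ w i → ψ i (v j) = 0) :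
    LinearIndependent R v := by
  classical
  rw [linearIndependent_iff']
  intro s a hsum
  by_contra! h
  obtain ⟨i₀, hi₀, ha₀⟩ := h
  obtain ⟨i, hi, hmax⟩ := Finset.exists_max_image (s.filter (a · ≠ 0)) w
    ⟨i₀, Finset.mem_filter.2 ⟨hi₀, ha₀⟩⟩
  obtain ⟨his, hai⟩ := Finset.mem_filter.1 hi
  have hψ : ∑ j ∈ s, a j * ψ i (v j) = 0 := by
    simpa only [map_sum, map_smul, smul_eq_mul, map_zero] using congrArg (ψ i) hsum
  rw [Finset.sum_eq_single_of_mem i his fun j hj hji => ?_] at hψ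
  · exact mul_ne_zero hai (hdiag i) hψ
  · by_cases haj : a j = 0
    · rw [haj, zero_mul]
    · rw [hoff i j hji (hmax j (Finset.mem_filter.2 ⟨hj, haj⟩)), mul_zero]

variable {k V : Type*} [Field k] [CharZero k] [AddCommGroup V] [Module k V] {μ : YoungDiagram}
  {ρ : Representation k (Perm μ.cells) V} {e : V} {φ : V →ₗ[k] k} {f : μ.cells → ℕ}

lemma mem_rowGroup_of_apply_ne_zero (he : IsColAlternating ρ e) (hφ : IsRowInvariant ρ φ)
    {g : Perm μ.cells} (hg : StrictMonoOnFibers colOf rowOf (f ∘ g))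
    (hle : positionWeight rowOf (f ∘ g) ≤ positionWeight rowOf f) (hne : φ (ρ g e) ≠ 0) :
    g ∈ rowGroup μ := by
  obtain ⟨r, hr, c, hc, rfl⟩ := exists_mul_eq_of_apply_ne_zero he hφ hne
  obtain rfl : c = 1 := by
    by_contra hc1
    have hlt := hg.positionWeight_comp_lt injective_colOf_rowOf (inv_mem hc) (inv_ne_one.2 hc1)
    have hcomp : (f ∘ ⇑(r * c)) ∘ ⇑c⁻¹ = f ∘ r := funext fun x => by simp
    rw [hcomp, positionWeight_comp_of_mem_youngSubgroup f hr] at hlt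
    exact hlt.not_ge hle
  simpa using hr

lemma apply_transportSum_self_ne_zero (he : IsColAlternating ρ e) (hφ : IsRowInvariant ρ φ)
    (hφe : φ e ≠ 0) (hf : StrictMonoOnFibers colOf rowOf f) :
    φ (transportSum ρ f f e) ≠ 0 := by
  have hterm : ∀ g ∈ Finset.univ.filter fun g : Perm μ.cells => f ∘ ⇑g = f,
      φ (ρ g e) = if g ∈ rowGroup μ then φ e else 0 := by
    intro g hg
    have hfg : f ∘ ⇑g = f := (Finset.mem_filter.1 hg).2
    split_ifs with hrow
    · exact hφ g hrow e
    · by_contra h0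
      exact hrow (mem_rowGroup_of_apply_ne_zero he hφ (hfg.symm ▸ hf) (by rw [hfg]) h0)
  rw [transportSum_apply, map_sum, Finset.sum_congr rfl hterm, ← Finset.sum_filter,
    Finset.sum_const, nsmul_eq_mul]
  exact mul_ne_zero (Nat.cast_ne_zero.2 (Finset.card_ne_zero_of_mem (a := 1) (by simp))) hφe

lemma apply_transportSum_eq_zero (he : IsColAlternating ρ e) (hφ : IsRowInvariant ρ φ)
    {T : μ.cells → ℕ} (hTcol : StrictMonoOnFibers colOf rowOf T)
    (hTrow : MonoOnFibers rowOf colOf T) (hf : MonoOnFibers rowOf colOf f) (hne : T ≠ f)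
    (hle : positionWeight rowOf T ≤ positionWeight rowOf f) :
    φ (transportSum ρ f T e) = 0 := by
  rw [transportSum_apply, map_sum]
  refine Finset.sum_eq_zero fun g hg => ?_
  obtain rfl := (Finset.mem_filter.1 hg).2
  by_contra h0
  have hrow := mem_rowGroup_of_apply_ne_zero he hφ hTcol hle h0
  exact hne (hf.comp_eq injective_rowOf_colOf hrow hTrow)

variable (f) in
lemma linearIndepOn_transportSum (he : IsColAlternating ρ e) (hφ : IsRowInvariant ρ φ)
    (hφe : φ e ≠ 0) :
    LinearIndepOn k (fun S => transportSum ρ f S e) (semistandardRearrangements f) := by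
  choose u hu using fun S : semistandardRearrangements f => S.2.1
  -- Moving the reference labelling from `f` to `S` makes the coefficient matrix triangular.
  have hψ (S T : semistandardRearrangements f) :
      (φ ∘ₗ ρ (u S)⁻¹) (transportSum ρ f T.1 e) = φ (transportSum ρ S.1 T.1 e) := by
    rw [← hu S, transportSum_comp_left, LinearMap.comp_apply]
  refine linearIndependent_of_triangular (fun S => positionWeight rowOf S.1)
    (fun S => φ ∘ₗ ρ (u S)⁻¹) (fun S => ?_) fun S T hTS hle => ?_
  · rw [hψ]
    exact apply_transportSum_self_ne_zero he hφ hφe S.2.2.1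
  · rw [hψ]
    exact apply_transportSum_eq_zero he hφ T.2.2.1 T.2.2.2 S.2.2.2 (Subtype.coe_ne_coe.2 hTS) hle

end Independence

section YoungRule

open Equiv

variable {μ : YoungDiagram}

lemma card_filter_cells (p : ℕ × ℕ → Prop) [DecidablePred p] :
    (μ.cells.filter p).card = (Finset.univ.filter fun x : μ.cells => p x).card := by
  rw [← Fintype.card_subtype, ← Fintype.card_coe]
  exact Fintype.card_congr ((Equiv.subtypeEquivRight fun x => by simp [and_comm]).trans
    (Equiv.subtypeSubtypeEquivSubtypeInter _ p).symm)

lemma exists_perm_comp_eq_iff_card_fiber_eq {α ι : Type*} [Fintype α] [DecidableEq ι]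
    (f g : α → ι) :
    (∃ σ : Perm α, f ∘ σ = g) ↔ ∀ i, (Finset.univ.filter fun x => g x = i).card =
      (Finset.univ.filter fun x => f x = i).card := by
  refine ⟨?_, exists_equiv_comp_eq_of_card_fiber_eq g f⟩
  rintro ⟨σ, rfl⟩ i
  exact Finset.card_equiv σ (by simp)

/-- Semistandard tableaux as fillings of the cells. -/
def semistandardFillingEquiv (μ : YoungDiagram) : SemistandardYoungTableau μ ≃
    {S : μ.cells → ℕ // StrictMonoOnFibers colOf rowOf S ∧ MonoOnFibers rowOf colOf S} where
  toFun T := ⟨fun x => T (rowOf x) (colOf x),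
    fun x y hcol hrow => by
      change T (rowOf x) (colOf x) < T (rowOf y) (colOf y)
      rw [hcol]
      exact T.col_strict hrow (by simp),
    fun x y hrow hcol => by
      change T (rowOf x) (colOf x) ≤ T (rowOf y) (colOf y)
      rw [hrow]
      exact T.row_weak_of_le hcol (by simp)⟩
  invFun S :=
    { entry i j := if h : (i, j) ∈ μ.cells then S.1 ⟨(i, j), h⟩ else 0
      row_weak' {i j₁ j₂} hj hcell := by
        have hcell₁ := μ.up_left_mem le_rfl hj.le hcell
        rw [← YoungDiagram.mem_cells] at hcell hcell₁
        rw [dif_pos hcell, dif_pos hcell₁]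
        exact S.2.2 rfl hj.le
      col_strict' {i₁ i₂ j} hi hcell := by
        have hcell₁ := μ.up_left_mem hi.le le_rfl hcell
        rw [← YoungDiagram.mem_cells] at hcell hcell₁
        rw [dif_pos hcell, dif_pos hcell₁]
        exact S.2.1 rfl hi
      zeros' h := dif_neg (by simpa using h) }
  left_inv T := by
    ext i j
    by_cases h : (i, j) ∈ μ
    · exact dif_pos (by simpa using h)
    · exact (dif_neg (by simpa using h)).trans (T.zeros h).symm
  right_inv S := Subtype.ext (funext fun x => dif_pos x.2)

lemma natCard_semistandardRearrangements_eq_kostkaNumber {f : μ.cells → ℕ} {c : ℕ → ℕ}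
    (hf : ∀ n, (Finset.univ.filter fun x => f x = n).card = c n) :
    Nat.card (semistandardRearrangements f) = kostkaNumber μ c := by
  symm
  refine Nat.card_congr <|
    ((semistandardFillingEquiv μ).subtypeEquiv
      (q := fun S => ∃ g : Perm μ.cells, f ∘ g = S.1) fun T => ?_).trans <|
    (Equiv.subtypeSubtypeEquivSubtypeInter _ fun S => ∃ g : Perm μ.cells, f ∘ g = S).trans <|
    Equiv.subtypeEquivRight fun S => and_comm
  simp only [exists_perm_comp_eq_iff_card_fiber_eq, hf, card_filter_cells]
  rfl

variable {k V : Type*} [Field k] [CharZero k] [AddCommGroup V] [Module k V]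
  {ρ : Representation k (Perm μ.cells) V} {e : V} {φ : V →ₗ[k] k} {f : μ.cells → ℕ}

lemma invariants_youngSubgroup_eq_span (hirr : ρ.IsIrred) (he : IsColAlternating ρ e)
    (hφ : IsRowInvariant ρ φ) (hφe : φ e ≠ 0) (f : μ.cells → ℕ) :
    Representation.invariants (MonoidHom.comp ρ (youngSubgroup f).subtype) =
      Submodule.span k ((fun S => transportSum ρ f S e) '' semistandardRearrangements f) := by
  let ρf := MonoidHom.comp ρ (youngSubgroup f).subtype
  have hnorm (u : Perm μ.cells) :
      Representation.norm ρf (ρ u e) = transportSum ρ f (f ∘ u) e := by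
    rw [transportSum_comp_self]
    simp [Representation.norm, ρf]
  have he0 : e ≠ 0 := fun h => hφe (by simp [h])
  rw [← range_norm_eq_invariants, LinearMap.range_eq_map,
    ← span_range_apply_eq_top_of_isIrred hirr he0, Submodule.map_span, ← Set.range_comp]
  refine le_antisymm (Submodule.span_le.2 ?_) (Submodule.span_mono ?_)
  · rintro _ ⟨u, rfl⟩
    rw [Function.comp_apply, hnorm]
    exact transportSum_mem_span_semistandard f hirr he hφ hφe u
  · rintro _ ⟨_, ⟨⟨u, rfl⟩, -⟩, rfl⟩
    exact ⟨u, hnorm u⟩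

lemma finrank_invariants_youngSubgroup (hirr : ρ.IsIrred) (he : IsColAlternating ρ e)
    (hφ : IsRowInvariant ρ φ) (hφe : φ e ≠ 0) (f : μ.cells → ℕ) :
    finrank k (Representation.invariants (MonoidHom.comp ρ (youngSubgroup f).subtype)) =
      Nat.card (semistandardRearrangements f) := by
  rw [invariants_youngSubgroup_eq_span hirr he hφ hφe, Set.image_eq_range]
  exact finrank_eq_nat_card_basis (Basis.span (linearIndepOn_transportSum f he hφ hφe))

end YoungRule

section Blocks

variable {μ : YoungDiagram} {N : ℕ}

lemma blockIdx_cons (a : ℕ) (l : List ℕ) (m : ℕ) :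
    blockIdx (a :: l) m = if m < a then 0 else blockIdx l (m - a) + 1 := by
  have htail (j : ℕ) : ((a :: l).take (j + 1 + 1)).sum = a + (l.take (j + 1)).sum := by simp
  have hhead : ((a :: l).take (0 + 1)).sum = a := by simp
  simp only [blockIdx, List.length_cons, List.range_succ_eq_map, List.filter_cons, List.filter_map,
    Function.comp_def, Nat.succ_eq_add_one, htail, hhead, decide_eq_true_eq]
  split_ifs with hle hlt hlt
  · lia
  · simp only [List.length_cons, List.length_map, Nat.le_sub_iff_add_le' hle]
  · rw [List.length_map, List.length_eq_zero_iff, List.filter_eq_nil_iff]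
    intro j _
    simp only [decide_eq_true_eq]
    lia
  · lia

lemma card_filter_blockIdx (l : List ℕ) (i : ℕ) :
    ((Finset.range l.sum).filter fun m => blockIdx l m = i).card = l.getD i 0 := by
  induction l generalizing i with
  | nil => simp
  | cons a l ih =>
    have hhead : ∀ m ∈ Finset.range a, blockIdx (a :: l) m = 0 := fun m hm => by
      rw [blockIdx_cons, if_pos (Finset.mem_range.1 hm)]
    have htail (m : ℕ) : blockIdx (a :: l) (a + m) = blockIdx l m + 1 := by
      simp [blockIdx_cons]
    rw [Finset.card_filter, List.sum_cons, Finset.sum_range_add,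
      Finset.sum_congr rfl fun m hm => by rw [hhead m hm]]
    simp only [htail]
    cases i with
    | zero => simp
    | succ i => simpa using ih i

lemma card_filter_rowOf_eq (i : ℕ) :
    (Finset.univ.filter fun x : μ.cells => rowOf x = i).card = μ.rowLen i := by
  rw [YoungDiagram.rowLen_eq_card, YoungDiagram.row, ← card_filter_cells fun x => x.1 = i]

lemma sum_rowLens (μ : YoungDiagram) : μ.rowLens.sum = μ.card := by
  have hmaps : ∀ x ∈ μ.cells, x.1 ∈ Finset.range (μ.colLen 0) := fun x hx =>
    Finset.mem_range.2 <| YoungDiagram.mem_iff_lt_colLen.1 <|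
      μ.up_left_mem le_rfl (Nat.zero_le x.2) ((YoungDiagram.mem_cells _).1 hx)
  rw [YoungDiagram.card, Finset.card_eq_sum_card_fiberwise hmaps, YoungDiagram.rowLens,
    ← List.sum_toFinset _ List.nodup_range, List.toFinset_range]
  exact Finset.sum_congr rfl fun i _ => μ.rowLen_eq_card

lemma getD_rowLens (μ : YoungDiagram) (i : ℕ) : μ.rowLens.getD i 0 = μ.rowLen i := by
  by_cases h : i < μ.rowLens.length
  · rw [List.getD_eq_getElem _ _ h, ← YoungDiagram.get_rowLens (h := h)]
  · rw [List.getD_eq_default _ _ (not_lt.1 h)]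
    rw [YoungDiagram.length_rowLens, ← YoungDiagram.mem_iff_lt_colLen,
      YoungDiagram.mem_iff_lt_rowLen] at h
    lia

lemma card_transpose (μ : YoungDiagram) : μ.transpose.card = μ.card := by
  simp [YoungDiagram.card, YoungDiagram.transpose]

lemma exists_equiv_blockIdx_rowLens (hμ : μ.card = N) :
    ∃ t : μ.cells ≃ Fin N, (fun k : Fin N => blockIdx μ.rowLens k) ∘ t = rowOf := by
  refine exists_equiv_comp_eq_of_card_fiber_eq _ _ fun i => ?_
  rw [card_filter_rowOf_eq, ← getD_rowLens, ← card_filter_blockIdx, sum_rowLens, hμ,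
    Finset.card_filter, Finset.card_filter,
    Fin.sum_univ_eq_sum_range fun m => if blockIdx μ.rowLens m = i then 1 else 0]

lemma exists_equiv_blockIdx_colLens (hμ : μ.card = N) :
    ∃ t : μ.cells ≃ Fin N, (fun k : Fin N => blockIdx μ.transpose.rowLens k) ∘ t = colOf := by
  obtain ⟨t, ht⟩ := exists_equiv_blockIdx_rowLens ((card_transpose μ).trans hμ)
  let s : μ.cells ≃ μ.transpose.cells :=
    (Equiv.prodComm ℕ ℕ).subtypeEquiv fun x => by simp
  exact ⟨s.trans t, funext fun x => congrFun ht (s x)⟩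

end Blocks

section Fin

open Equiv

variable {k V : Type*} [Field k] [CharZero k] [AddCommGroup V] [Module k V] {μ : YoungDiagram}
  {N : ℕ} {ρ : Representation k (Perm (Fin N)) V}

theorem finrank_invariants_eq_kostkaNumber (hμ : μ.card = N) (hirr : ρ.IsIrred)
    (htriv : ∃ v : V, v ≠ 0 ∧ ∀ σ : Perm (Fin N), IsInYoungSubgroup μ.rowLens σ → ρ σ v = v)
    (hsgn : ∃ v : V, v ≠ 0 ∧ ∀ σ : Perm (Fin N), IsInYoungSubgroup μ.transpose.rowLens σ →
      ρ σ v = Perm.sign σ • v)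
    {f : Fin N → ℕ} {c : ℕ → ℕ} (hf : ∀ n, (Finset.univ.filter fun x => f x = n).card = c n) :
    finrank k (Representation.invariants (MonoidHom.comp ρ (youngSubgroup f).subtype)) =
      kostkaNumber μ c := by
  obtain ⟨t, ht⟩ := exists_equiv_blockIdx_rowLens hμ
  obtain ⟨t', ht'⟩ := exists_equiv_blockIdx_colLens hμ
  obtain ⟨v, hv0, hv⟩ := htriv
  obtain ⟨w, hw0, hw⟩ := hsgn
  let ρ' : Representation k (Perm μ.cells) V := MonoidHom.comp ρ t.permCongrHom.toMonoidHom
  have hirr' : ρ'.IsIrred := isIrred_comp_of_surjective t.permCongrHom.surjective hirr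
  have hv' : ∀ r ∈ rowGroup μ, ρ' r v = v := fun r hr =>
    hv _ ((permCongr_mem_youngSubgroup t).2 (by rwa [ht]))
  -- `w` is alternating for the column group read through `t'`, hence has to be moved to `t`.
  let s : Perm (Fin N) := t'.symm.trans t
  have hsw0 : ρ s w ≠ 0 := fun h => hw0 <| by
    simpa [h] using (ρ.inv_self_apply s w).symm
  have hsw : IsColAlternating ρ' (ρ s w) := fun c hc => by
    have hconj : t.permCongr c * s = s * t'.permCongr c := by
      ext k
      simp [s]
    have hmem : IsInYoungSubgroup μ.transpose.rowLens (t'.permCongr c) :=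
      (permCongr_mem_youngSubgroup t').2 (by rwa [ht'])
    change ρ (t.permCongr c) (ρ s w) = _
    rw [← Module.End.mul_apply, ← map_mul, hconj, map_mul, Module.End.mul_apply, hw _ hmem,
      LinearMap.map_smul_of_tower, Perm.sign_permCongr]
  obtain ⟨φ, hφ, hφe⟩ := exists_isRowInvariant_apply_ne_zero hirr' hv0 hv' hsw0 hsw
  have hinv : Representation.invariants (MonoidHom.comp ρ (youngSubgroup f).subtype) =
      Representation.invariants (MonoidHom.comp ρ' (youngSubgroup (f ∘ t)).subtype) := by
    ext x
    simp only [Representation.mem_invariants, Subtype.forall, ← permCongr_mem_youngSubgroup]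
    exact (t.permCongr.forall_congr_right (q := fun σ => ∀ _ : σ ∈ youngSubgroup f, ρ σ x = x)).symm
  rw [hinv, finrank_invariants_youngSubgroup hirr' hsw hφ hφe]
  refine natCard_semistandardRearrangements_eq_kostkaNumber fun n => ?_
  rw [← hf n]
  exact Finset.card_equiv t fun x => by simp

end Fin

section Folding

open Equiv

variable {N : ℕ}

/-- The labelling of `{0, …, N - 1}` identifying `j` and `N - 1 - j` for `j < i`. For
`i ≤ N / 2` it encodes the set partition whose Young subgroup is of type `(2^i, 1^{N-2i})`. -/
def foldLabel (i : ℕ) (k : Fin N) : ℕ :=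
  if min (k : ℕ) k.rev < i then min (k : ℕ) k.rev else k

/-- The involution exchanging `j` and `N - 1 - j` for all `j ∈ U`; only `U ∩ {0, …, ⌊N/2⌋ - 1}`
matters. -/
def partialRev (U : Finset ℕ) : Perm (Fin N) :=
  Function.Involutive.toPerm (fun k => if min (k : ℕ) k.rev ∈ U then k.rev else k) fun k => by
    by_cases h : min (k : ℕ) k.rev ∈ U
    · simp only [if_pos h, Fin.rev_rev, min_comm (k.rev : ℕ) k]
    · simp only [if_neg h]

lemma partialRev_apply (U : Finset ℕ) (k : Fin N) :
    partialRev U k = if min (k : ℕ) k.rev ∈ U then k.rev else k := rfl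

lemma partialRev_mul_self (U : Finset ℕ) : (partialRev U * partialRev U : Perm (Fin N)) = 1 :=
  Equiv.ext (Function.Involutive.toPerm_involutive _)

lemma mem_support_partialRev {U : Finset ℕ} (hU : U ⊆ Finset.range (N / 2)) (k : Fin N) :
    k ∈ (partialRev U : Perm (Fin N)).support ↔ min (k : ℕ) k.rev ∈ U := by
  rw [Perm.mem_support, partialRev_apply]
  split_ifs with hk
  · have hlt : min (k : ℕ) k.rev < N / 2 := Finset.mem_range.1 (hU hk)
    refine iff_of_true ?_ hk
    rw [Fin.val_rev] at hlt
    rw [ne_eq, Fin.ext_iff, Fin.val_rev]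
    omega
  · simp only [ne_eq, not_true_eq_false, hk]

lemma card_filter_min_rev_eq {j : ℕ} (hj : j < N / 2) :
    (Finset.univ.filter fun k : Fin N => min (k : ℕ) k.rev = j).card = 2 := by
  have hjN : j < N := by omega
  refine Finset.card_eq_two.2 ⟨⟨j, hjN⟩, Fin.rev ⟨j, hjN⟩, ?_, ?_⟩
  · simp only [ne_eq, Fin.ext_iff, Fin.val_rev]
    omega
  · ext k
    simp only [Finset.mem_filter, Finset.mem_univ, true_and, Finset.mem_insert,
      Finset.mem_singleton, Fin.ext_iff, Fin.val_rev]
    omega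

lemma card_support_partialRev {U : Finset ℕ} (hU : U ⊆ Finset.range (N / 2)) :
    (partialRev U : Perm (Fin N)).support.card = U.card * 2 := by
  rw [Finset.card_eq_sum_card_fiberwise (f := fun k : Fin N => min (k : ℕ) k.rev) (t := U)
    fun k hk => (mem_support_partialRev hU k).1 hk, ← smul_eq_mul, ← Finset.sum_const]
  refine Finset.sum_congr rfl fun j hj => ?_
  rw [← card_filter_min_rev_eq (Finset.mem_range.1 (hU hj))]
  congr 1
  ext k
  simp only [Finset.mem_filter, mem_support_partialRev hU, Finset.mem_univ, true_and,
    and_iff_right_iff_imp]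
  rintro rfl
  exact hj

lemma cycleType_partialRev {U : Finset ℕ} (hU : U ⊆ Finset.range (N / 2)) :
    (partialRev U : Perm (Fin N)).cycleType = Multiset.replicate U.card 2 := by
  have htwo : ∀ c ∈ (partialRev U : Perm (Fin N)).cycleType, c = 2 :=
    Perm.pow_prime_eq_one_iff.1 ((pow_two _).trans (partialRev_mul_self U))
  have hsum := Perm.sum_cycleType (partialRev U : Perm (Fin N))
  rw [Multiset.eq_replicate_card.2 htwo, Multiset.sum_replicate, smul_eq_mul,
    card_support_partialRev hU] at hsum
  rw [Multiset.eq_replicate_card.2 htwo, Nat.eq_of_mul_eq_mul_right two_pos hsum]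

lemma isConj_partialRev {U : Finset ℕ} (hU : U ⊆ Finset.range (N / 2)) :
    IsConj (partialRev (Finset.range U.card) : Perm (Fin N)) (partialRev U) := by
  have hcard : Finset.range U.card ⊆ Finset.range (N / 2) :=
    Finset.range_subset_range.2 ((Finset.card_le_card hU).trans (Finset.card_range _).le)
  rw [Perm.isConj_iff_cycleType_eq, cycleType_partialRev hU, cycleType_partialRev hcard,
    Finset.card_range]

lemma injOn_partialRev {i : ℕ} (hi : i ≤ N / 2) :
    Set.InjOn (partialRev : Finset ℕ → Perm (Fin N)) (Finset.range i).powerset := by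
  intro U hU U' hU' h
  rw [Finset.mem_coe, Finset.mem_powerset] at hU hU'
  have hsub : Finset.range i ⊆ Finset.range (N / 2) := Finset.range_subset_range.2 hi
  ext j
  by_cases hj : j < i
  · have hmin : min j (N - (j + 1)) = j := by omega
    have hjU := mem_support_partialRev (hU.trans hsub) (⟨j, by omega⟩ : Fin N)
    have hjU' := mem_support_partialRev (hU'.trans hsub) (⟨j, by omega⟩ : Fin N)
    rw [Fin.val_rev, hmin] at hjU hjU'
    rw [← hjU, ← hjU', h]
  · exact iff_of_false (fun hjU => hj (Finset.mem_range.1 (hU hjU)))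
      fun hjU' => hj (Finset.mem_range.1 (hU' hjU'))

lemma partialRev_range_half :
    (partialRev (Finset.range (N / 2)) : Perm (Fin N)) = Fin.revPerm := by
  ext k
  rw [partialRev_apply, Fin.revPerm_apply]
  split_ifs with hk
  · rfl
  · rw [Finset.mem_range, Fin.val_rev] at hk
    rw [Fin.val_rev]
    omega

lemma sign_revPerm : Perm.sign (Fin.revPerm : Perm (Fin N)) = (-1) ^ (N / 2) := by
  rw [← partialRev_range_half, Perm.sign_of_cycleType, cycleType_partialRev subset_rfl,
    Multiset.sum_replicate, Multiset.card_replicate, Finset.card_range, smul_eq_mul, pow_add,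
    pow_mul', neg_one_sq, one_pow, one_mul]

lemma card_filter_foldLabel_eq {i : ℕ} (hi : i ≤ N / 2) (j : ℕ) :
    (Finset.univ.filter fun k : Fin N => foldLabel i k = j).card = twoOneContent N i j := by
  unfold twoOneContent foldLabel
  split_ifs with hji hj
  · rw [← card_filter_min_rev_eq (N := N) (hji.trans_le hi)]
    congr 1
    ext k
    simp only [Finset.mem_filter, Finset.mem_univ, true_and, Fin.val_rev]
    split_ifs <;> omega
  · refine Finset.card_eq_one.2 ⟨⟨j, by omega⟩, ?_⟩
    ext k
    simp only [Finset.mem_filter, Finset.mem_univ, true_and, Fin.val_rev, Finset.mem_singleton,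
      Fin.ext_iff]
    split_ifs <;> omega
  · rw [Finset.card_eq_zero, Finset.filter_eq_empty_iff]
    intro k _
    rw [Fin.val_rev]
    split_ifs <;> omega

lemma foldLabel_eq_iff {i : ℕ} (hi : i ≤ N / 2) (k l : Fin N) :
    foldLabel i k = foldLabel i l ↔ k = l ∨ k = l.rev ∧ min (l : ℕ) l.rev < i := by
  simp only [foldLabel, Fin.ext_iff, Fin.val_rev]
  split_ifs <;> omega

lemma partialRev_image_min_rev_support {σ : Perm (Fin N)} (hσ : ∀ k, σ k = k ∨ σ k = k.rev) :
    partialRev (σ.support.image fun k : Fin N => min (k : ℕ) k.rev) = σ := by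
  ext1 k
  have hk := hσ k
  have hrev := hσ k.rev
  have hinj : σ k = σ k.rev → k = k.rev := fun h => σ.injective h
  have hmem : min (k : ℕ) k.rev ∈ (σ.support.image fun l : Fin N => min (l : ℕ) l.rev) ↔
      σ k ≠ k ∨ σ k.rev ≠ k.rev := by
    have hmin (l : Fin N) : min (l : ℕ) l.rev = min (k : ℕ) k.rev ↔ l = k ∨ l = k.rev := by
      simp only [Fin.ext_iff, Fin.val_rev]
      omega
    simp only [Finset.mem_image, Perm.mem_support, hmin]
    grind
  rw [partialRev_apply, if_congr hmem rfl rfl]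
  rw [Fin.rev_rev] at hrev
  grind

lemma mem_youngSubgroup_foldLabel_iff {i : ℕ} (hi : i ≤ N / 2) {σ : Perm (Fin N)} :
    σ ∈ youngSubgroup (foldLabel i) ↔ ∃ U ⊆ Finset.range i, partialRev U = σ := by
  simp only [mem_youngSubgroup, foldLabel_eq_iff hi]
  constructor
  · intro hσ
    refine ⟨_, ?_, partialRev_image_min_rev_support fun k => (hσ k).imp_right And.left⟩
    refine Finset.image_subset_iff.2 fun k hk => Finset.mem_range.2 ?_
    exact ((hσ k).resolve_left (Perm.mem_support.1 hk)).2
  · rintro ⟨U, hU, rfl⟩ k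
    rw [partialRev_apply]
    split_ifs with hk
    · exact Or.inr ⟨rfl, Finset.mem_range.1 (hU hk)⟩
    · exact Or.inl rfl

lemma filter_mem_youngSubgroup_foldLabel {i : ℕ} (hi : i ≤ N / 2) :
    (Finset.univ.filter fun σ : Perm (Fin N) => σ ∈ youngSubgroup (foldLabel i)) =
      (Finset.range i).powerset.image partialRev := by
  ext σ
  simp only [Finset.mem_filter, Finset.mem_univ, true_and, mem_youngSubgroup_foldLabel_iff hi,
    Finset.mem_image, Finset.mem_powerset]

lemma sum_youngSubgroup_foldLabel {M : Type*} [AddCommMonoid M] {i : ℕ} (hi : i ≤ N / 2)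
    (F : Perm (Fin N) → M) :
    ∑ σ : youngSubgroup (foldLabel (N := N) i), F σ =
      ∑ U ∈ (Finset.range i).powerset, F (partialRev U) := by
  rw [← Finset.sum_image (injOn_partialRev hi), ← filter_mem_youngSubgroup_foldLabel hi]
  exact (Finset.sum_subtype _ (fun σ => by simp) F).symm

lemma natCard_youngSubgroup_foldLabel {i : ℕ} (hi : i ≤ N / 2) :
    Nat.card (youngSubgroup (foldLabel (N := N) i)) = 2 ^ i := by
  simpa using sum_youngSubgroup_foldLabel hi fun _ => (1 : ℕ)

end Folding

section Characters

open Equiv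

lemma fwdDiff_iter_zero_eq_of_sum_choose {G : Type*} [AddCommGroup G] {f X : ℕ → G} {r : ℕ}
    (h : ∀ i ≤ r, f i = ∑ m ∈ Finset.range (i + 1), i.choose m • X m) :
    (fwdDiff 1)^[r] f 0 = X r := by
  induction r using Nat.strong_induction_on with
  | _ r ih =>
    have hnewton := shift_eq_sum_fwdDiff_iter 1 f r 0
    rw [smul_eq_mul, mul_one, zero_add, h r le_rfl, Finset.sum_range_succ, Finset.sum_range_succ,
      Finset.sum_congr rfl fun m hm => by
        rw [← ih m (Finset.mem_range.1 hm) fun i hi => h i (hi.trans (Finset.mem_range.1 hm).le)],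
      add_right_inj, Nat.choose_self, one_smul, one_smul] at hnewton
    exact hnewton.symm

lemma sum_neg_two_pow_mul_choose_mul {R : Type*} [CommRing R] {r : ℕ} {X d : ℕ → R}
    (h : ∀ i ≤ r, 2 ^ i * d i = ∑ m ∈ Finset.range (i + 1), i.choose m • X m) :
    ∑ i ∈ Finset.range (r + 1), (-2) ^ i * (r.choose i : R) * d i = (-1) ^ r * X r := by
  rw [← fwdDiff_iter_zero_eq_of_sum_choose (f := fun i => 2 ^ i * d i) h,
    fwdDiff_iter_eq_sum_shift, Finset.mul_sum]
  refine Finset.sum_congr rfl fun i hi => ?_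
  obtain ⟨j, rfl⟩ := Nat.exists_eq_add_of_le (Finset.mem_range_succ_iff.1 hi)
  have hsq : ((-1 : R) ^ j) * (-1) ^ j = 1 := by rw [← mul_pow, neg_one_mul, neg_neg, one_pow]
  simp only [zero_add, smul_eq_mul, mul_one, add_tsub_cancel_left, zsmul_eq_mul, Int.cast_mul,
    Int.cast_pow, Int.cast_neg, Int.cast_one, Int.cast_natCast, pow_add, neg_pow (2 : R) i]
  linear_combination (-(-1) ^ i * 2 ^ i * ((i + j).choose i : R) * d i) * hsq

variable {k V : Type*} [Field k] [AddCommGroup V] [Module k V]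

lemma character_eq_of_isConj {G : Type*} [Group G] (ρ : Representation k G V) {g h : G}
    (hgh : IsConj g h) : ρ.character g = ρ.character h := by
  obtain ⟨c, rfl⟩ := isConj_iff.1 hgh
  exact (ρ.char_conj g c).symm

variable [CharZero k] {N : ℕ}

lemma sum_character_eq_natCard_mul_finrank_invariants {G : Type*} [Group G] [Fintype G]
    [FiniteDimensional k V] (ρ : Representation k G V) :
    ∑ g, ρ.character g = Nat.card G * (finrank k ρ.invariants : k) := by
  have hG : (Nat.card G : k) ≠ 0 := Nat.cast_ne_zero.2 Nat.card_pos.ne'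
  let := invertibleOfNonzero hG
  rw [← ρ.card_inv_mul_sum_char_eq_finrank, mul_inv_cancel_left₀ hG]

lemma two_pow_mul_finrank_invariants_foldLabel [FiniteDimensional k V]
    (ρ : Representation k (Perm (Fin N)) V) {i : ℕ} (hi : i ≤ N / 2) :
    2 ^ i * (finrank k (Representation.invariants
        (MonoidHom.comp ρ (youngSubgroup (foldLabel i)).subtype)) : k) =
      ∑ m ∈ Finset.range (i + 1), i.choose m • ρ.character (partialRev (Finset.range m)) := by
  have hcharacter : ∀ U ∈ (Finset.range i).powerset,
      ρ.character (partialRev U) = ρ.character (partialRev (Finset.range U.card)) := fun U hU =>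
    (character_eq_of_isConj ρ <| isConj_partialRev <|
      (Finset.mem_powerset.1 hU).trans (Finset.range_subset_range.2 hi)).symm
  calc _ = ∑ σ : youngSubgroup (foldLabel (N := N) i), ρ.character σ := by
        have h := sum_character_eq_natCard_mul_finrank_invariants
          (MonoidHom.comp ρ (youngSubgroup (foldLabel (N := N) i)).subtype)
        rw [natCard_youngSubgroup_foldLabel hi, Nat.cast_pow, Nat.cast_ofNat] at h
        exact h.symm
    _ = ∑ U ∈ (Finset.range i).powerset, ρ.character (partialRev (Finset.range U.card)) := by
        rw [sum_youngSubgroup_foldLabel hi ρ.character, Finset.sum_congr rfl hcharacter]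
    _ = _ := by
        rw [Finset.sum_powerset_apply_card fun m => ρ.character (partialRev (Finset.range m)),
          Finset.card_range]

theorem character_longest_element_eq_kostka_sum_general {μ : YoungDiagram} (hμ : μ.card = N)
    {ρ : Representation k (Perm (Fin N)) V} (hirr : ρ.IsIrred)
    (htriv : ∃ v : V, v ≠ 0 ∧ ∀ σ : Perm (Fin N), IsInYoungSubgroup μ.rowLens σ → ρ σ v = v)
    (hsgn : ∃ v : V, v ≠ 0 ∧ ∀ σ : Perm (Fin N), IsInYoungSubgroup μ.transpose.rowLens σ →
      ρ σ v = ((Perm.sign σ : ℤ) : k) • v) :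
    LinearMap.trace k V (ρ Fin.revPerm) = ∑ i ∈ Finset.range (N / 2 + 1),
      (-2 : k) ^ i * (N / 2).choose i * kostkaNumber μ.transpose (twoOneContent N i) := by
  have := module_finite_of_isIrred hirr
  obtain ⟨u, hu, hutriv⟩ := htriv
  obtain ⟨v, hv, hvsgn⟩ := hsgn
  have hkostka {i : ℕ} (hi : i ≤ N / 2) : finrank k (Representation.invariants
      (MonoidHom.comp (signTwist Perm.sign ρ) (youngSubgroup (foldLabel i)).subtype)) =
        kostkaNumber μ.transpose (twoOneContent N i) := by
    refine finrank_invariants_eq_kostkaNumber ((card_transpose μ).trans hμ)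
      (isIrred_signTwist Perm.sign hirr) ⟨v, hv, fun σ hσ => ?_⟩ ⟨u, hu, fun σ hσ => ?_⟩
      (card_filter_foldLabel_eq hi)
    · rw [signTwist_apply, hvsgn σ hσ, Int.cast_smul_eq_zsmul, ← Units.smul_def, smul_smul,
        Int.units_mul_self, one_smul]
    · rw [signTwist_apply, hutriv σ (by rwa [YoungDiagram.transpose_transpose] at hσ)]
  have hinversion := sum_neg_two_pow_mul_choose_mul fun i (hi : i ≤ N / 2) =>
    hkostka hi ▸ two_pow_mul_finrank_invariants_foldLabel (signTwist Perm.sign ρ) hi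
  rw [hinversion, partialRev_range_half, Representation.character, trace_signTwist, sign_revPerm,
    Units.smul_def, ← Int.cast_smul_eq_zsmul k, smul_eq_mul, ← mul_assoc]
  simp [← mul_pow]

end Characters

/-- Let `w₀` be the longest element of `S_N` (the order-reversing permutation), let `λ`
(here: a Young diagram `μ` with `N` cells) be a partition of `N` with irreducible
character `χ_λ` — where the irreducible representation `π_λ` is characterized by being
irreducible, containing the trivial representation upon restriction to the Young subgroup
`S_λ` and the sign representation upon restriction to `S_{λᵗ}` — and set `r = ⌊N/2⌋`.
Then `χ_λ(w₀) = Σ_{i=0}^{r} (−2)^i C(r,i) K_{λᵗ, (2^i,1^{N−2i})}`. -/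
theorem character_longest_element_eq_kostka_sum (N : ℕ) (μ : YoungDiagram) (hμ : μ.card = N)
    {V : Type*} [AddCommGroup V] [Module ℂ V] [FiniteDimensional ℂ V] [Nontrivial V]
    (ρ : Representation ℂ (Equiv.Perm (Fin N)) V) (hirr : ρ.IsIrred)
    (htriv : ∃ v : V, v ≠ 0 ∧ ∀ σ : Equiv.Perm (Fin N),
      IsInYoungSubgroup μ.rowLens σ → ρ σ v = v)
    (hsgn : ∃ v : V, v ≠ 0 ∧ ∀ σ : Equiv.Perm (Fin N),
      IsInYoungSubgroup μ.transpose.rowLens σ →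
        ρ σ v = ((Equiv.Perm.sign σ : ℤ) : ℂ) • v) :
    LinearMap.trace ℂ V (ρ (Fin.revPerm : Equiv.Perm (Fin N))) =
      ∑ i ∈ Finset.range (N / 2 + 1),
        ((-2 : ℂ)) ^ i * ((N / 2).choose i) * (kostkaNumber μ.transpose (twoOneContent N i)) :=
  character_longest_element_eq_kostka_sum_general hμ hirr htriv hsgn
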